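/- arXiv:math/0506409 — 2 statements merged into one kernel-verified Lean document; each statement's English description precedes it below -/
import Mathlib

section
/- Multiscale Riemann–Lebesgue lemma: Let φ : (ℝ^d)^n → ℝ be continuous and ℤ^d-periodic in each of its n vector arguments, and set φ_h(x) := φ(x/ρ_1(ε_h), …, x/ρ_n(ε_h)). Then φ_h converges to the constant ∫_{□^n} φ(y¹,…,yⁿ) dy¹…dyⁿ in the weak* topology of L^∞(Ω); that is, for every u ∈ L^1(Ω) one has ∫_Ω u(x) φ_h(x) dx → (∫_{□^n} φ(y) dy)·(∫_Ω u(x) dx) as h → ∞. -/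
open MeasureTheory Filter Topology

/-- The unit cell `□ = [0,1)^d` in `ℝ^d`. -/
def unitCell (d : ℕ) : Set (Fin d → ℝ) := Set.univ.pi fun _ => Set.Ico (0 : ℝ) 1

/-- The `n`-fold product `□^n` of unit cells. -/
def unitCellPow (d n : ℕ) : Set (Fin n → Fin d → ℝ) := Set.univ.pi fun _ => unitCell d

/-- `φ : (ℝ^d)^n → ℝ` is `ℤ^d`-periodic in each of its `n` vector arguments. -/
def PeriodicN {d n : ℕ} (φ : (Fin n → Fin d → ℝ) → ℝ) : Prop :=
  ∀ (y : Fin n → Fin d → ℝ) (c : Fin n → Fin d → ℤ),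
    φ (fun k i => y k i + (c k i : ℝ)) = φ y

/-!
Read on the torus `(ℝ/ℤ)^(nd)`, `φ` is a uniform limit of trigonometric polynomials, and the
functionals `F ↦ ∫ u · F(x/r₁, …, x/rₙ)` are Lipschitz in `F` for the sup norm with the common
constant `‖u‖₁`, so it suffices to treat a single character. For a nontrivial one the integral is
the Fourier transform of `u` at the frequency `∑ₖ mₖ/rₖ`. By separation of scales this sum is
dominated by the term of the finest scale with `mₖ ≠ 0`, so the frequency tends to infinity and the
Riemann–Lebesgue lemma applies.
-/

open Asymptotics Bornology Set

section Scales

variable {α : Type*} {l : Filter α}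

theorem isLittleO_of_lt_of_forall_succ {E : Type*} [NormedAddCommGroup E] {n : ℕ}
    {f : Fin n → α → E}
    (hf : ∀ (k : ℕ) (hk : k + 1 < n), f ⟨k + 1, hk⟩ =o[l] f ⟨k, Nat.lt_of_succ_lt hk⟩)
    {i j : Fin n} (hij : i < j) : f j =o[l] f i := by
  have : IsTrans (α → E) fun f g => g =o[l] f := ⟨fun _ _ _ hfg hgh => hgh.trans hfg⟩
  cases n with
  | zero => exact i.elim0
  | succ n =>
    exact (Fin.liftFun_iff_succ fun f g => g =o[l] f).2
      (fun k => hf k (Nat.succ_lt_succ k.isLt)) hij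

variable {κ : Type*} [Fintype κ] [LinearOrder κ]

theorem tendsto_norm_sum_div_atTop {𝕜 : Type*} [NormedField 𝕜] {r : κ → α → 𝕜}
    (hr : ∀ k, Tendsto (r k) l (𝓝[≠] 0)) (hsep : ∀ ⦃i j⦄, i < j → r j =o[l] r i)
    {c : κ → 𝕜} (hc : c ≠ 0) : Tendsto (fun a => ‖∑ k, c k / r k a‖) l atTop := by
  obtain ⟨K, hcK, hK⟩ := exists_max_image c.support id (toFinite _)
    (Function.support_nonempty_iff.2 hc)
  have hlead : (fun _ => (1 : ℝ)) =o[l] fun a => c K / r K a := by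
    rw [isLittleO_one_left_iff]
    simp only [div_eq_mul_inv, norm_mul]
    exact (tendsto_norm_inv_nhdsNE_zero_atTop.comp (hr K)).const_mul_atTop
      (norm_pos_iff.2 hcK)
  have hrest : (fun a => ∑ k ∈ Finset.univ.erase K, c k / r k a) =o[l] fun a => c K / r K a := by
    rw [← Finset.sum_fn]
    refine IsLittleO.sum fun k hk => ?_
    rcases (Finset.ne_of_mem_erase hk).lt_or_gt with hkK | hKk
    · have hinv : (fun a => (r k a)⁻¹) =o[l] fun a => (r K a)⁻¹ :=
        (hsep hkK).inv_rev <| ((hr K).eventually_mem self_mem_nhdsWithin).mono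
          fun a ha h0 => absurd h0 ha
      simpa only [div_eq_mul_inv] using (hinv.const_mul_left (c k)).const_mul_right hcK
    · have hck : c k = 0 := by
        by_contra h
        exact (hK k h).not_gt hKk
      simp only [hck, zero_div, isLittleO_zero]
  rw [← isLittleO_one_left_iff ℝ]
  exact hlead.trans_isBigO <| hrest.right_isBigO_add'.congr_right fun a =>
    Finset.add_sum_erase _ (fun k => c k / r k a) (Finset.mem_univ K)

end Scales

section Nonresonance

variable {α ι κ : Type*}

/-- The forms `ℓ a i` become nonresonant along `l`: each nontrivial integer combination of them
escapes to infinity in the dual space. -/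
def AsymptoticallyNonresonant {V : Type*} [Fintype ι] [NormedAddCommGroup V] [NormedSpace ℝ V]
    (l : Filter α) (ℓ : α → ι → StrongDual ℝ V) : Prop :=
  ∀ m : ι → ℤ, m ≠ 0 → Tendsto (fun a => ∑ i, m i • ℓ a i) l (cobounded _)

/-- The linear forms `x ↦ xᵢ / rₖ`, i.e. the coordinates of `(x / r₁, …, x / rₙ)`. -/
noncomputable def scaledCoord (r : κ → ℝ) (p : κ × ι) : StrongDual ℝ (ι → ℝ) :=
  (r p.1)⁻¹ • ContinuousLinearMap.proj p.2

theorem scaledCoord_apply (r : κ → ℝ) (p : κ × ι) (x : ι → ℝ) :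
    scaledCoord r p x = x p.2 / r p.1 := by
  simp [scaledCoord, div_eq_inv_mul]

theorem asymptoticallyNonresonant_scaledCoord [Fintype ι] [Fintype κ] [LinearOrder κ]
    {l : Filter α} {r : κ → α → ℝ} (hr : ∀ k, Tendsto (r k) l (𝓝[≠] 0))
    (hsep : ∀ ⦃i j⦄, i < j → r j =o[l] r i) :
    AsymptoticallyNonresonant l fun a => scaledCoord (ι := ι) (r · a) := by
  classical
  intro m hm
  obtain ⟨⟨k, i⟩, hki⟩ := Function.ne_iff.1 hm
  have hc : (fun k => (m (k, i) : ℝ)) ≠ 0 := Function.ne_iff.2 ⟨k, by simpa using hki⟩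
  have heval (a : α) : (∑ p, m p • scaledCoord (r · a) p) (Pi.single i 1)
      = ∑ k, (m (k, i) : ℝ) / r k a := by
    simp [scaledCoord_apply, Fintype.sum_prod_type, Pi.single_apply, div_eq_mul_inv]
  rw [← tendsto_norm_atTop_iff_cobounded]
  refine tendsto_atTop_mono (fun a => ?_) (tendsto_norm_sum_div_atTop hr hsep hc)
  rw [← heval]
  exact ContinuousLinearMap.unit_le_opNorm _ _ (by simp [Pi.norm_single])

end Nonresonance

section Torus

variable {ι : Type*}

/-- The projection `ℝ^ι → (ℝ/ℤ)^ι`. -/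
def unitAddTorusMk (ι : Type*) : C(ι → ℝ, UnitAddTorus ι) where
  toFun y i := y i
  continuous_toFun := by fun_prop

theorem isOpenQuotientMap_unitAddTorusMk : IsOpenQuotientMap (unitAddTorusMk ι) :=
  .piMap fun _ => QuotientAddGroup.isOpenQuotientMap_mk

theorem exists_add_intCast_eq_of_unitAddTorusMk_eq {y z : ι → ℝ}
    (h : unitAddTorusMk ι y = unitAddTorusMk ι z) : ∃ m : ι → ℤ, (fun i => y i + m i) = z := by
  have hi (i : ι) : ∃ m : ℤ, y i + m = z i := by
    obtain ⟨m, hm⟩ := AddCircle.coe_eq_zero_iff (1 : ℝ) |>.1 <|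
      (AddCircle.coe_sub 1 (z i) (y i)).trans (sub_eq_zero.2 (congrFun h i).symm)
    exact ⟨m, by rw [zsmul_one] at hm; rw [hm]; ring⟩
  choose m hm using hi
  exact ⟨m, funext hm⟩

theorem exists_comp_unitAddTorusMk_eq {Z : Type*} [TopologicalSpace Z] (f : C(ι → ℝ, Z))
    (hf : ∀ (y : ι → ℝ) (m : ι → ℤ), f (fun i => y i + m i) = f y) :
    ∃ F : C(UnitAddTorus ι, Z), F.comp (unitAddTorusMk ι) = f := by
  refine ⟨isOpenQuotientMap_unitAddTorusMk.isQuotientMap.lift f fun y z hyz => ?_,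
    Topology.IsQuotientMap.lift_comp _ _ _⟩
  obtain ⟨m, rfl⟩ := exists_add_intCast_eq_of_unitAddTorusMk_eq hyz
  exact (hf y m).symm

instance : IsProbabilityMeasure (volume : Measure UnitAddCircle) := ⟨UnitAddCircle.measure_univ⟩

variable [Fintype ι]

instance : IsProbabilityMeasure (volume : Measure (UnitAddTorus ι)) :=
  inferInstanceAs (IsProbabilityMeasure (Measure.pi _))

theorem measurePreserving_unitAddTorusMk :
    MeasurePreserving (unitAddTorusMk ι)
      (volume.restrict (univ.pi fun _ : ι => Ico (0 : ℝ) 1)) := by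
  have hmk : MeasurePreserving ((↑) : ℝ → UnitAddCircle) (volume.restrict (Ico 0 1)) := by
    simpa [restrict_Ico_eq_restrict_Ioc] using UnitAddCircle.measurePreserving_mk 0
  rw [volume_pi (α := fun _ : ι => ℝ), Measure.restrict_pi_pi]
  exact measurePreserving_pi _ (fun _ => (volume : Measure UnitAddCircle)) fun _ => hmk

theorem integral_mFourier {m : ι → ℤ} (hm : m ≠ 0) :
    ∫ t, UnitAddTorus.mFourier m t = 0 := by
  obtain ⟨i, hi⟩ := Function.ne_iff.1 hm
  have hfourier : ∫ t : UnitAddCircle, (fourier (m i) t : ℂ) = 0 := by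
    have hcoeff := congrFun (fourierCoeff_fourier (T := 1) (m i)) 0
    rw [Pi.single_eq_of_ne (Ne.symm hi : (0 : ℤ) ≠ m i)] at hcoeff
    simpa [fourierCoeff, AddCircle.volume_eq_smul_haarAddCircle] using hcoeff
  simp only [UnitAddTorus.mFourier, ContinuousMap.coe_mk]
  rw [integral_fintype_prod_volume_eq_prod (fun i (t : UnitAddCircle) => fourier (m i) t)]
  exact Finset.prod_eq_zero (Finset.mem_univ i) hfourier

theorem mFourier_unitAddTorusMk (m : ι → ℤ) (y : ι → ℝ) :
    UnitAddTorus.mFourier m (unitAddTorusMk ι y) = Real.fourierChar (∑ i, m i * y i) := by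
  simp only [UnitAddTorus.mFourier, unitAddTorusMk, ContinuousMap.coe_mk, fourier_coe_apply,
    Real.fourierChar_apply, ← Complex.exp_sum]
  push_cast
  simp only [Finset.mul_sum, Finset.sum_mul, div_one]
  congr! 2
  ring

end Torus

section Equidistribution

variable {X Y E : Type*} [MeasurableSpace X] {μ : Measure X} [TopologicalSpace Y] [CompactSpace Y]
  [NormedAddCommGroup E] [NormedSpace ℂ E] {g : X → Y} {u : X → E}

theorem integrable_comp_smul (hg : AEStronglyMeasurable g μ) (hu : Integrable u μ) (F : C(Y, ℂ)) :
    Integrable (fun x => F (g x) • u x) μ :=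
  hu.bdd_smul ‖F‖ (F.continuous.comp_aestronglyMeasurable hg)
    (ae_of_all _ fun x => F.norm_coe_le_norm (g x))

theorem lipschitzWith_integral_comp_smul (hg : AEStronglyMeasurable g μ) (hu : Integrable u μ) :
    LipschitzWith (∫ x, ‖u x‖ ∂μ).toNNReal fun F : C(Y, ℂ) => ∫ x, F (g x) • u x ∂μ := by
  refine LipschitzWith.of_dist_le_mul fun F G => ?_
  rw [Real.coe_toNNReal _ (integral_nonneg fun _ => norm_nonneg _), dist_eq_norm, dist_eq_norm,
    ← integral_sub (integrable_comp_smul hg hu F) (integrable_comp_smul hg hu G),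
    ← integral_mul_const]
  refine norm_integral_le_of_norm_le (hu.norm.mul_const _) (ae_of_all _ fun x => ?_)
  rw [← sub_smul, norm_smul, mul_comm]
  gcongr
  exact (F - G).norm_coe_le_norm (g x)

variable {α ι V : Type*} {l : Filter α} [Fintype ι] [NormedAddCommGroup V] [NormedSpace ℝ V]
  [FiniteDimensional ℝ V] [MeasurableSpace V] [BorelSpace V] {ν : Measure V} [ν.IsAddHaarMeasure]
  {ℓ : α → ι → StrongDual ℝ V}

theorem AsymptoticallyNonresonant.tendsto_integral_mFourier_smul
    (hℓ : AsymptoticallyNonresonant l ℓ) {m : ι → ℤ} (hm : m ≠ 0) (u : V → E) :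
    Tendsto (fun a => ∫ x, UnitAddTorus.mFourier m (unitAddTorusMk ι (ℓ a · x)) • u x ∂ν) l
      (𝓝 0) := by
  have hcocompact := (hℓ (-m) (neg_ne_zero.2 hm)).mono_right Metric.cobounded_le_cocompact
  refine ((tendsto_integral_exp_smul_cocompact u ν).comp hcocompact).congr fun a => ?_
  simp [mFourier_unitAddTorusMk, Circle.smul_def]

theorem AsymptoticallyNonresonant.tendsto_integral_torus_of_mem_span
    (hℓ : AsymptoticallyNonresonant l ℓ) {u : V → E} (hu : Integrable u ν)
    {F : C(UnitAddTorus ι, ℂ)} (hF : F ∈ Submodule.span ℂ (range UnitAddTorus.mFourier)) :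
    Tendsto (fun a => ∫ x, F (unitAddTorusMk ι (ℓ a · x)) • u x ∂ν) l
      (𝓝 ((∫ t, F t) • ∫ x, u x ∂ν)) := by
  induction hF using Submodule.span_induction with
  | mem F hF =>
    obtain ⟨m, rfl⟩ := hF
    rcases eq_or_ne m 0 with rfl | hm
    · simp [UnitAddTorus.mFourier_zero, tendsto_const_nhds]
    · simpa [integral_mFourier hm] using hℓ.tendsto_integral_mFourier_smul hm u
  | zero => simp [tendsto_const_nhds]
  | add F G _ _ hF hG =>
    have hint (F : C(UnitAddTorus ι, ℂ)) : Integrable F :=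
      F.continuous.integrable_of_hasCompactSupport (.of_compactSpace F)
    have hint_smul (F : C(UnitAddTorus ι, ℂ)) (a : α) :
        Integrable (fun x => F (unitAddTorusMk ι (ℓ a · x)) • u x) ν :=
      integrable_comp_smul (Continuous.aestronglyMeasurable (by fun_prop)) hu F
    simpa [add_smul, integral_add, hint, hint_smul] using hF.add hG
  | smul c F _ hF => simpa [mul_smul, integral_const_mul, integral_smul] using hF.const_smul c

theorem AsymptoticallyNonresonant.tendsto_integral_torus
    (hℓ : AsymptoticallyNonresonant l ℓ) {u : V → E} (hu : Integrable u ν)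
    (F : C(UnitAddTorus ι, ℂ)) :
    Tendsto (fun a => ∫ x, F (unitAddTorusMk ι (ℓ a · x)) • u x ∂ν) l
      (𝓝 ((∫ t, F t) • ∫ x, u x ∂ν)) := by
  have hlim : Continuous fun F : C(UnitAddTorus ι, ℂ) => (∫ t, F t) • ∫ x, u x ∂ν := by
    have := (lipschitzWith_integral_comp_smul (μ := volume) (Y := UnitAddTorus ι)
      aestronglyMeasurable_id (integrable_const (1 : ℂ))).continuous
    simp only [id, smul_eq_mul, mul_one] at this
    exact this.smul continuous_const
  have hequi : Equicontinuous fun (a : α) (F : C(UnitAddTorus ι, ℂ)) =>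
      ∫ x, F (unitAddTorusMk ι (ℓ a · x)) • u x ∂ν :=
    (LipschitzWith.uniformEquicontinuous _ _ fun a => lipschitzWith_integral_comp_smul
      (Continuous.aestronglyMeasurable (by fun_prop)) hu).equicontinuous
  have hdense : F ∈ closure
      (Submodule.span ℂ (range (UnitAddTorus.mFourier (d := ι))) : Set C(UnitAddTorus ι, ℂ)) := by
    rw [← Submodule.topologicalClosure_coe, UnitAddTorus.span_mFourier_closure_eq_top]
    exact mem_univ F
  exact closure_minimal (fun _ hG => hℓ.tendsto_integral_torus_of_mem_span hu hG)
    (hequi.isClosed_setOfPred_tendsto hlim) hdense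

theorem AsymptoticallyNonresonant.tendsto_integral_periodic
    (hℓ : AsymptoticallyNonresonant l ℓ) {u : V → E} (hu : Integrable u ν)
    {f : (ι → ℝ) → ℂ} (hfc : Continuous f)
    (hf : ∀ (y : ι → ℝ) (m : ι → ℤ), f (fun i => y i + m i) = f y) :
    Tendsto (fun a => ∫ x, f (ℓ a · x) • u x ∂ν) l
      (𝓝 ((∫ y in univ.pi fun _ => Ico 0 1, f y) • ∫ x, u x ∂ν)) := by
  obtain ⟨F, hF⟩ := exists_comp_unitAddTorusMk_eq ⟨f, hfc⟩ hf
  obtain rfl : F ∘ unitAddTorusMk ι = f := congrArg DFunLike.coe hF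
  have := measurePreserving_unitAddTorusMk (ι := ι)
  have hmean : ∫ y in univ.pi fun _ => Ico 0 1, F (unitAddTorusMk ι y) = ∫ t, F t := by
    rw [← this.map_eq, integral_map this.aemeasurable F.continuous.aestronglyMeasurable]
  simpa only [Function.comp_apply, hmean] using hℓ.tendsto_integral_torus hu F

end Equidistribution

theorem volume_preserving_curry (ι κ X : Type*) [Fintype ι] [Fintype κ] [MeasureSpace X]
    [SigmaFinite (volume : Measure X)] : MeasurePreserving (MeasurableEquiv.curry ι κ X) := by
  refine MeasurePreserving.symm (MeasurableEquiv.curry ι κ X).symm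
    ⟨MeasurableEquiv.measurable _, (Measure.pi_eq fun s _ => ?_).symm⟩
  rw [MeasurableEquiv.map_apply]
  have : (MeasurableEquiv.curry ι κ X).symm ⁻¹' univ.pi s
      = univ.pi fun i => univ.pi fun j => s (i, j) := by
    ext y
    simp [Set.mem_pi]
  rw [this]
  simp_rw [volume_pi_pi, Fintype.prod_prod_type]

theorem setIntegral_unitCellPow_eq {E : Type*} [NormedAddCommGroup E] [NormedSpace ℝ E] {d n : ℕ}
    (f : (Fin n → Fin d → ℝ) → E) :
    ∫ y in unitCellPow d n, f y =
      ∫ y in univ.pi fun _ : Fin n × Fin d => Ico (0 : ℝ) 1, f (fun k i => y (k, i)) := by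
  have hpre : MeasurableEquiv.curry (Fin n) (Fin d) ℝ ⁻¹' unitCellPow d n
      = univ.pi fun _ => Ico 0 1 := by
    ext y
    simp [unitCellPow, unitCell, Set.mem_pi]
  rw [← (volume_preserving_curry _ _ _).setIntegral_preimage_emb
    (MeasurableEquiv.measurableEmbedding _), hpre]
  rfl

theorem statement0_general {α : Type*} {l : Filter α} {d n : ℕ} {Ω : Set (Fin d → ℝ)}
    (hΩ : MeasurableSet Ω) {r : Fin n → α → ℝ} (hr : ∀ k, Tendsto (r k) l (𝓝[≠] 0))
    (hsep : ∀ (k : ℕ) (hk : k + 1 < n),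
      Tendsto (fun a => r ⟨k + 1, hk⟩ a / r ⟨k, Nat.lt_of_succ_lt hk⟩ a) l (𝓝 0))
    {φ : (Fin n → Fin d → ℝ) → ℝ} (hφc : Continuous φ) (hφp : PeriodicN φ)
    {u : (Fin d → ℝ) → ℝ} (hu : IntegrableOn u Ω) :
    Tendsto (fun a => ∫ x in Ω, u x * φ (fun k i => x i / r k a)) l
      (𝓝 ((∫ y in unitCellPow d n, φ y) * ∫ x in Ω, u x)) := by
  have hsucc (k : ℕ) (hk : k + 1 < n) : r ⟨k + 1, hk⟩ =o[l] r ⟨k, Nat.lt_of_succ_lt hk⟩ :=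
    (isLittleO_iff_tendsto' <| ((hr _).eventually_mem self_mem_nhdsWithin).mono
      fun a ha h0 => absurd h0 ha).2 (hsep k hk)
  have hℓ := asymptoticallyNonresonant_scaledCoord (ι := Fin d) hr
    fun _ _ hij => isLittleO_of_lt_of_forall_succ hsucc hij
  have hlim := hℓ.tendsto_integral_periodic (ν := volume)
    (f := fun y => (φ fun k i => y (k, i) : ℂ)) (u := fun x => ((Ω.indicator u x : ℝ) : ℂ))
    (hu.integrable_indicator hΩ).ofReal
    (by fun_prop)
    (fun y m => congrArg _ (hφp (Function.curry y) (Function.curry m)))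
  simp only [smul_eq_mul, ← Complex.ofReal_mul, integral_complex_ofReal] at hlim
  rw [tendsto_ofReal_iff] at hlim
  have hind (a : α) : ∫ x in Ω, u x * φ (fun k i => x i / r k a)
      = ∫ x, φ (fun k i => scaledCoord (r · a) (k, i) x) * Ω.indicator u x := by
    rw [← integral_indicator hΩ]
    refine integral_congr_ae (ae_of_all _ fun x => ?_)
    simp only [scaledCoord_apply, indicator_mul_left, mul_comm]
  simpa only [hind, setIntegral_unitCellPow_eq, integral_indicator hΩ] using hlim

/-- **Multiscale Riemann–Lebesgue lemma.** -/
theorem statement0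
    (d n : ℕ) (hd : 0 < d) (hn : 0 < n)
    (Ω : Set (Fin d → ℝ)) (hΩo : IsOpen Ω) (hΩb : Bornology.IsBounded Ω)
    (ρ : Fin n → ℝ → ℝ) (hρpos : ∀ k e, 0 < e → 0 < ρ k e)
    (hρ0 : ∀ k, Tendsto (ρ k) (𝓝[>] 0) (𝓝 0))
    (hsep : ∀ (k : ℕ) (hk : k + 1 < n),
      Tendsto (fun e => ρ ⟨k + 1, hk⟩ e / ρ ⟨k, Nat.lt_of_succ_lt hk⟩ e) (𝓝[>] 0) (𝓝 0))
    (ε : ℕ → ℝ) (hεpos : ∀ h, 0 < ε h) (hε0 : Tendsto ε atTop (𝓝 0))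
    (φ : (Fin n → Fin d → ℝ) → ℝ) (hφc : Continuous φ) (hφp : PeriodicN φ)
    (u : (Fin d → ℝ) → ℝ) (hu : IntegrableOn u Ω) :
    Tendsto (fun h => ∫ x in Ω, u x * φ (fun k i => x i / ρ k (ε h))) atTop
      (𝓝 ((∫ y in unitCellPow d n, φ y) * ∫ x in Ω, u x)) := by
  have hε : Tendsto ε atTop (𝓝[>] 0) := tendsto_nhdsWithin_iff.2 ⟨hε0, .of_forall hεpos⟩
  exact statement0_general hΩo.measurableSet
    (fun k => tendsto_nhdsWithin_iff.2
      ⟨(hρ0 k).comp hε, .of_forall fun h => (hρpos k _ (hεpos h)).ne'⟩)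
    (fun k hk => (hsep k hk).comp hε) hφc hφp hu
end

section
/- For k = 1, …, n let A_k be a Lebesgue measurable subset of □ and let A := A_1 × ⋯ × A_n ⊆ □^n. Then the sequence of functions x ↦ χ_A(v_h(x)) = ∏_{k=1}^n χ_{A_k}(⟨x/ρ_k(ε_h)⟩) converges to the constant |A| = ∏_{k=1}^n |A_k| in the weak* topology of L^∞(Ω); that is, for every u ∈ L^1(Ω), ∫_Ω u(x) χ_A(v_h(x)) dx → |A| ∫_Ω u(x) dx as h → ∞. -/
open MeasureTheory Filter Topology

/-- The oscillating sequence `v_h(x) = (⟨x/ρ_1(ε_h)⟩, …, ⟨x/ρ_n(ε_h)⟩)`,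
where `⟨·⟩` is the componentwise fractional part. -/
noncomputable def vFn {d n : ℕ} (ρ : Fin n → ℝ → ℝ) (ε : ℕ → ℝ) (h : ℕ)
    (x : Fin d → ℝ) : Fin n → Fin d → ℝ :=
  fun k i => Int.fract (x i / ρ k (ε h))

/-!
Let `F` be bounded and periodic with mean `m`. Since `∫ F (x / r) w x` does not change when `x` is
shifted by `r z`, averaging over `z` in a period cell gives
`∫ F (x / r) w x - m ∫ w x = avg_z ∫ F (x / r + z) (w (x + r z) - w x)`,
which is at most `sup |F|` times the `L¹` modulus of continuity of `w` at scale `r`. This tends to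
`0` as soon as `w`, which may itself depend on `r`, varies slowly at scale `r`.

Applying this to the finest scale, with `w` the product of `u` and all coarser oscillations, peels
off the factors one at a time. Slow variation of `w` at the finest scale `s` comes from the same
estimate: a shift by `s z` moves the argument of a coarser oscillation `F (x / r)` by
`(s / r) z → 0`, and `∫ |F (x / r + (s / r) z) - F (x / r)| |u x|` is an oscillating integral whose
profile has mean tending to `0`, by continuity of translation in `L¹`.
-/

open Module Set
open scoped ProbabilityTheory

section Modulus

variable {G E : Type*} [AddCommGroup G] [MeasurableSpace G] [NormedAddCommGroup E]

/-- The `L¹(μ)` modulus of continuity `t ↦ ∫ ‖f (x + t) - f x‖ dμ(x)` of a function `f`. -/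
noncomputable def l1Modulus (μ : Measure G) (f : G → E) (t : G) : ℝ :=
  ∫ x, ‖f (x + t) - f x‖ ∂μ

lemma l1Modulus_nonneg (μ : Measure G) (f : G → E) (t : G) : 0 ≤ l1Modulus μ f t :=
  integral_nonneg fun _ => norm_nonneg _

lemma tendsto_l1Modulus_zero [TopologicalSpace G] [IsTopologicalAddGroup G] [R1Space G]
    [BorelSpace G] {μ : Measure G} [IsLocallyFiniteMeasure μ] [μ.InnerRegularCompactLTTop]
    [μ.IsAddLeftInvariant] {f : G → E} (hf : Integrable f μ) :
    Tendsto (l1Modulus μ f) (𝓝 0) (𝓝 0) := by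
  have : Fact ((1 : ENNReal) ≠ ⊤) := ⟨ENNReal.one_ne_top⟩
  have hf1 : MemLp f 1 μ := memLp_one_iff_integrable.2 hf
  have hcont : Continuous fun t : G => ‖(DomAddAct.mk t +ᵥ hf1.toLp f) - hf1.toLp f‖ := by
    have hmk : Continuous fun t : G => DomAddAct.mk t := DomAddAct.continuous_mk
    exact ((hmk.vadd continuous_const).sub continuous_const).norm
  have hnorm (t : G) : ‖(DomAddAct.mk t +ᵥ hf1.toLp f) - hf1.toLp f‖ = l1Modulus μ f t := by
    rw [L1.norm_eq_integral_norm, DomAddAct.mk_vadd_toLp, ← MemLp.toLp_sub]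
    refine integral_congr_ae ((MemLp.coeFn_toLp (hf1.comp_measurePreserving
      (measurePreserving_vadd t μ) |>.sub hf1)).mono fun x hx => (congrArg norm hx).trans ?_)
    simp only [Function.comp_apply, Pi.sub_apply, vadd_eq_add, add_comm t]
  have h0 : l1Modulus μ f 0 = 0 := by simp [l1Modulus]
  simpa only [hnorm, h0] using hcont.tendsto 0

lemma tendsto_l1Modulus_restrict_zero {V : Type*} [NormedAddCommGroup V] [ProperSpace V]
    [MeasurableSpace V] [BorelSpace V] {μ : Measure V} [μ.IsAddHaarMeasure] {f : V → E}
    (hf : LocallyIntegrable f μ) {s : Set V} (hs : MeasurableSet s) (hsb : Bornology.IsBounded s) :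
    Tendsto (l1Modulus (μ.restrict s) f) (𝓝 0) (𝓝 0) := by
  obtain ⟨R, hR⟩ := hsb.subset_closedBall 0
  set B : Set V := Metric.closedBall 0 (R + 1) with hB
  have hBf : Integrable (B.indicator f) μ :=
    (integrable_indicator_iff Metric.isClosed_closedBall.measurableSet).2
      (hf.integrableOn_isCompact (isCompact_closedBall 0 (R + 1)))
  refine tendsto_of_tendsto_of_tendsto_of_le_of_le' tendsto_const_nhds (tendsto_l1Modulus_zero hBf)
    (.of_forall (l1Modulus_nonneg _ f)) ?_
  filter_upwards [Metric.closedBall_mem_nhds (0 : V) one_pos] with t ht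
  have ht1 : ‖t‖ ≤ 1 := mem_closedBall_zero_iff.1 ht
  have hsB {x : V} (hx : x ∈ s) : x ∈ B ∧ x + t ∈ B := by
    have hxR : ‖x‖ ≤ R := mem_closedBall_zero_iff.1 (hR hx)
    simp only [hB, mem_closedBall_zero_iff]
    exact ⟨by linarith, by linarith [norm_add_le x t]⟩
  calc l1Modulus (μ.restrict s) f t = l1Modulus (μ.restrict s) (B.indicator f) t :=
        setIntegral_congr_fun hs fun x hx => by
          rw [indicator_of_mem (hsB hx).1, indicator_of_mem (hsB hx).2]
    _ ≤ l1Modulus μ (B.indicator f) t :=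
        setIntegral_le_integral ((hBf.comp_add_right t).sub hBf).norm
          (.of_forall fun _ => norm_nonneg _)

lemma l1Modulus_smul_le [NormedSpace ℝ E] [MeasurableAdd G] {μ : Measure G} [μ.IsAddRightInvariant]
    {φ : G → ℝ} {w : G → E} {g : G → ℝ} {C : ℝ} (hφ : AEStronglyMeasurable φ μ)
    (hC : ∀ x, ‖φ x‖ ≤ C) (hw : Integrable w μ) (hg : Integrable g μ) (hwg : ∀ x, ‖w x‖ ≤ g x)
    (t : G) :
    l1Modulus μ (fun x => φ x • w x) t
      ≤ C * l1Modulus μ w t + ∫ x, ‖φ (x + t) - φ x‖ * g x ∂μ := by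
  have hφt : AEStronglyMeasurable (fun x => φ (x + t)) μ :=
    hφ.comp_measurePreserving (measurePreserving_add_right μ t)
  have hw_diff : Integrable (fun x => C * ‖w (x + t) - w x‖) μ :=
    ((hw.comp_add_right t).sub hw).norm.const_mul C
  have hφ_bound (x : G) : ‖‖φ (x + t) - φ x‖‖ ≤ C + C :=
    (norm_norm _).trans_le (norm_sub_le_of_le (hC (x + t)) (hC x))
  have hφ_meas : AEStronglyMeasurable (fun x => ‖φ (x + t) - φ x‖) μ := (hφt.sub hφ).norm
  have hφ_diff : Integrable (fun x => ‖φ (x + t) - φ x‖ * g x) μ :=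
    hg.bdd_mul hφ_meas (ae_of_all μ hφ_bound)
  rw [l1Modulus, l1Modulus, ← integral_const_mul, ← integral_add hw_diff hφ_diff]
  refine integral_mono_of_nonneg (.of_forall fun x => norm_nonneg _) (hw_diff.add hφ_diff)
    (.of_forall fun x => ?_)
  calc ‖φ (x + t) • w (x + t) - φ x • w x‖
      = ‖φ (x + t) • (w (x + t) - w x) + (φ (x + t) - φ x) • w x‖ := by
        rw [smul_sub, sub_smul, sub_add_sub_cancel]
    _ ≤ ‖φ (x + t)‖ * ‖w (x + t) - w x‖ + ‖φ (x + t) - φ x‖ * ‖w x‖ :=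
        (norm_add_le _ _).trans_eq (by rw [norm_smul, norm_smul])
    _ ≤ C * ‖w (x + t) - w x‖ + ‖φ (x + t) - φ x‖ * g x := by
        gcongr
        exacts [hC _, hwg x]

end Modulus

section Cell

lemma periodic_of_mem_span_int {V W : Type*} [AddCommGroup V] {s : Set V} {f : V → W}
    (hf : ∀ v ∈ s, Function.Periodic f v) {g : V} (hg : g ∈ Submodule.span ℤ s) :
    Function.Periodic f g := by
  induction hg using Submodule.span_induction with
  | mem v hv => exact hf v hv
  | zero => intro x; rw [add_zero]
  | add v w _ _ hv hw => exact hv.add_period hw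
  | smul m v _ hv => exact hv.zsmul m

variable {V E ι : Type*} [NormedAddCommGroup V] [NormedSpace ℝ V] [MeasurableSpace V]
  [NormedAddCommGroup E] [NormedSpace ℝ E]

/-- The Haar measure `μ` conditioned on the fundamental domain of the lattice spanned by `b`:
integrating a lattice-periodic function against it gives its mean value. -/
noncomputable def cellMeasure (b : Basis ι ℝ V) (μ : Measure V) : Measure V :=
  μ[|ZSpan.fundamentalDomain b]

variable (b : Basis ι ℝ V) (μ : Measure V)

lemma cellMeasure_absolutelyContinuous : cellMeasure b μ ≪ μ :=
  ProbabilityTheory.cond_absolutelyContinuous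

lemma integral_cellMeasure (f : V → E) :
    ∫ z, f z ∂cellMeasure b μ
      = (μ.real (ZSpan.fundamentalDomain b))⁻¹ • ∫ z in ZSpan.fundamentalDomain b, f z ∂μ := by
  rw [cellMeasure, ProbabilityTheory.cond, integral_smul_measure, ENNReal.toReal_inv,
    measureReal_def]

variable [BorelSpace V] [Finite ι]

instance [μ.IsAddHaarMeasure] : IsProbabilityMeasure (cellMeasure b μ) :=
  have : FiniteDimensional ℝ V := b.finiteDimensional_of_finite
  ProbabilityTheory.cond_isProbabilityMeasure_of_finite
    (ZSpan.measure_fundamentalDomain_ne_zero b)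
    (ZSpan.fundamentalDomain_isBounded b).measure_lt_top.ne

lemma ae_mem_fundamentalDomain_cellMeasure :
    ∀ᵐ z ∂cellMeasure b μ, z ∈ ZSpan.fundamentalDomain b :=
  ProbabilityTheory.ae_cond_mem (ZSpan.fundamentalDomain_measurableSet b)

variable {b μ}

lemma integral_add_left_cellMeasure [μ.IsAddHaarMeasure] {f : V → E}
    (hf : ∀ i, Function.Periodic f (b i)) (y : V) :
    ∫ z, f (y + z) ∂cellMeasure b μ = ∫ z, f z ∂cellMeasure b μ := by
  have : VAddInvariantMeasure (Submodule.span ℤ (range b)) V μ :=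
    inferInstanceAs <| VAddInvariantMeasure (Submodule.span ℤ (range b)).toAddSubgroup V μ
  have hD := ZSpan.isAddFundamentalDomain b μ
  rw [integral_cellMeasure, integral_cellMeasure,
    ← (measurePreserving_add_left μ y).setIntegral_image_emb (measurableEmbedding_addLeft y)]
  congr 1
  refine (hD.vadd_of_comm y).setIntegral_eq hD fun g x => ?_
  rw [Submodule.vadd_def, vadd_eq_add, add_comm,
    periodic_of_mem_span_int (forall_mem_range.2 hf) g.2]

end Cell

section Averaging

variable {V E ι : Type*} [NormedAddCommGroup V] [NormedSpace ℝ V] [MeasurableSpace V]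
  [BorelSpace V] [Finite ι] [NormedAddCommGroup E] [NormedSpace ℝ E]
  {b : Basis ι ℝ V} {μ : Measure V} [μ.IsAddHaarMeasure]

omit [NormedSpace ℝ E] in
lemma tendsto_l1Modulus_cellMeasure_zero {F : V → E} (hF : LocallyIntegrable F μ) :
    Tendsto (l1Modulus (cellMeasure b μ) F) (𝓝 0) (𝓝 0) := by
  have : FiniteDimensional ℝ V := b.finiteDimensional_of_finite
  have : ProperSpace V := FiniteDimensional.proper_real V
  have h := (tendsto_l1Modulus_restrict_zero hF (ZSpan.fundamentalDomain_measurableSet b)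
    (ZSpan.fundamentalDomain_isBounded b)).const_mul (μ.real (ZSpan.fundamentalDomain b))⁻¹
  rw [mul_zero] at h
  exact h.congr fun t => (integral_cellMeasure b μ _).symm

lemma quasiMeasurePreserving_smul_add_const [FiniteDimensional ℝ V] {c : ℝ} (hc : c ≠ 0) (z : V) :
    Measure.QuasiMeasurePreserving (fun x => c • x + z) μ μ :=
  (measurePreserving_add_right μ z).quasiMeasurePreserving.comp
    (Measure.quasiMeasurePreserving_smul μ hc)

lemma integrable_oscillating_smul_prod {ν : Measure V} [IsFiniteMeasure ν] [FiniteDimensional ℝ V]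
    {F : V → ℝ} {C : ℝ} {w : V → E}
    (hF : AEStronglyMeasurable F μ) (hC : ∀ x, ‖F x‖ ≤ C) (hw : Integrable w μ) {r : ℝ}
    (hr : r ≠ 0) :
    Integrable (fun p : V × V => F (r⁻¹ • p.2 + p.1) • w p.2) (ν.prod μ) := by
  have hmap : Measure.QuasiMeasurePreserving (fun p : V × V => r⁻¹ • p.2 + p.1) (ν.prod μ) μ :=
    QuasiMeasurePreserving.prod_of_right (by fun_prop)
      (ae_of_all ν (quasiMeasurePreserving_smul_add_const (inv_ne_zero hr)))
  exact (hw.comp_snd ν).bdd_smul C (hF.comp_quasiMeasurePreserving hmap) (.of_forall fun p => hC _)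

lemma integral_oscillating_smul_sub_eq [CompleteSpace E] {F : V → ℝ} {C : ℝ} {w : V → E}
    (hF : AEStronglyMeasurable F μ) (hC : ∀ x, ‖F x‖ ≤ C) (hper : ∀ i, Function.Periodic F (b i))
    (hw : Integrable w μ) {r : ℝ} (hr : r ≠ 0) :
    ∫ x, F (r⁻¹ • x) • w x ∂μ - (∫ z, F z ∂cellMeasure b μ) • ∫ x, w x ∂μ
      = ∫ z, ∫ x, F (r⁻¹ • x + z) • (w (x + r • z) - w x) ∂μ ∂cellMeasure b μ := by
  have : FiniteDimensional ℝ V := b.finiteDimensional_of_finite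
  have hprod := integrable_oscillating_smul_prod (ν := cellMeasure b μ) hF hC hw hr
  have hint {v : V → E} (hv : Integrable v μ) (z : V) :
      Integrable (fun x => F (r⁻¹ • x + z) • v x) μ :=
    hv.bdd_smul C (hF.comp_quasiMeasurePreserving
      (quasiMeasurePreserving_smul_add_const (inv_ne_zero hr) z)) (ae_of_all μ fun x => hC _)
  have hshift (z : V) :
      ∫ x, F (r⁻¹ • x + z) • w (x + r • z) ∂μ = ∫ x, F (r⁻¹ • x) • w x ∂μ := by
    rw [← integral_add_right_eq_self (fun x => F (r⁻¹ • x) • w x) (r • z)]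
    simp only [smul_add, inv_smul_smul₀ hr]
  have hmean : ∫ z, ∫ x, F (r⁻¹ • x + z) • w x ∂μ ∂cellMeasure b μ
      = (∫ z, F z ∂cellMeasure b μ) • ∫ x, w x ∂μ := by
    rw [integral_integral_swap hprod]
    simp only [integral_smul_const, integral_add_left_cellMeasure hper, integral_smul]
  calc _ = ∫ z, (∫ x, F (r⁻¹ • x) • w x ∂μ - ∫ x, F (r⁻¹ • x + z) • w x ∂μ) ∂cellMeasure b μ := by
        rw [integral_sub (integrable_const _) hprod.integral_prod_left, hmean]
        simp
    _ = _ := by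
        refine integral_congr_ae (.of_forall fun z => ?_)
        simp only [smul_sub]
        rw [integral_sub (hint (hw.comp_add_right (r • z)) z) (hint hw z), hshift z]

lemma norm_integral_oscillating_smul_sub_le [CompleteSpace E] {F : V → ℝ} {C δ : ℝ} {w : V → E}
    (hF : AEStronglyMeasurable F μ) (hC : ∀ x, ‖F x‖ ≤ C) (hper : ∀ i, Function.Periodic F (b i))
    (hw : Integrable w μ) {r : ℝ} (hr : r ≠ 0)
    (hδ : ∀ z ∈ ZSpan.fundamentalDomain b, l1Modulus μ w (r • z) ≤ δ) :
    ‖∫ x, F (r⁻¹ • x) • w x ∂μ - (∫ z, F z ∂cellMeasure b μ) • ∫ x, w x ∂μ‖ ≤ C * δ := by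
  have hC0 : 0 ≤ C := (norm_nonneg _).trans (hC 0)
  have hinner (z : V) (hz : z ∈ ZSpan.fundamentalDomain b) :
      ‖∫ x, F (r⁻¹ • x + z) • (w (x + r • z) - w x) ∂μ‖ ≤ C * δ :=
    calc _ ≤ ∫ x, C * ‖w (x + r • z) - w x‖ ∂μ := by
          refine norm_integral_le_of_norm_le
            (((hw.comp_add_right (r • z)).sub hw).norm.const_mul C) (.of_forall fun x => ?_)
          rw [norm_smul]
          gcongr
          exact hC _
      _ = C * l1Modulus μ w (r • z) := integral_const_mul _ _
      _ ≤ C * δ := by gcongr; exact hδ z hz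
  rw [integral_oscillating_smul_sub_eq hF hC hper hw hr]
  simpa only [probReal_univ, mul_one] using norm_integral_le_of_norm_le_const
    ((ae_mem_fundamentalDomain_cellMeasure b μ).mono hinner)

end Averaging

section Scales

lemma norm_prod_le_prod_of_norm_le {κ R : Type*} [NormedCommRing R] [NormOneClass R]
    {K : Finset κ} {f : κ → R} {C : κ → ℝ} (hC : ∀ k ∈ K, ‖f k‖ ≤ C k) :
    ‖∏ k ∈ K, f k‖ ≤ ∏ k ∈ K, C k :=
  (Finset.norm_prod_le K f).trans (Finset.prod_le_prod (fun _ _ => norm_nonneg _) hC)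

variable {α V E ι κ : Type*} {l : Filter α} [NormedAddCommGroup V] [NormedSpace ℝ V]
  [MeasurableSpace V] [NormedAddCommGroup E]

/-- The functions `w a` vary slowly at scale `s a` in `L¹(μ)`: shifting them by `s a • z` changes
them by `o(1)` in `L¹(μ)` along the filter `l`, uniformly in `z ∈ D`. -/
def SlowlyVarying (μ : Measure V) (D : Set V) (l : Filter α) (s : α → ℝ) (w : α → V → E) : Prop :=
  Tendsto (fun p : α × V => l1Modulus μ (w p.1) (s p.1 • p.2)) (l ×ˢ 𝓟 D) (𝓝 0)

omit [MeasurableSpace V] in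
lemma tendsto_smul_snd_zero {D : Set V} (hD : Bornology.IsBounded D) {s : α → ℝ}
    (hs : Tendsto s l (𝓝 0)) : Tendsto (fun p : α × V => s p.1 • p.2) (l ×ˢ 𝓟 D) (𝓝 0) := by
  obtain ⟨R, hR⟩ := hD.exists_norm_le
  exact (hs.comp tendsto_fst).zero_smul_isBoundedUnder_le
    ⟨R, eventually_map.2 (tendsto_snd.eventually (eventually_principal.2 hR))⟩

variable [BorelSpace V] {μ : Measure V} [μ.IsAddHaarMeasure]

lemma slowlyVarying_const [FiniteDimensional ℝ V] {D : Set V} (hD : Bornology.IsBounded D)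
    {s : α → ℝ} (hs : Tendsto s l (𝓝 0)) {u : V → E} (hu : Integrable u μ) :
    SlowlyVarying μ D l s fun _ => u :=
  have : ProperSpace V := FiniteDimensional.proper_real V
  (tendsto_l1Modulus_zero hu).comp (tendsto_smul_snd_zero hD hs)

variable [NormedSpace ℝ E] [Finite ι] {b : Basis ι ℝ V}

lemma SlowlyVarying.tendsto_integral_oscillating_smul_sub [CompleteSpace E] {r : α → ℝ}
    {w : α → V → E} (hslow : SlowlyVarying μ (ZSpan.fundamentalDomain b) l r w)
    (hw : ∀ᶠ a in l, Integrable (w a) μ) (hr : ∀ᶠ a in l, r a ≠ 0) {F : α → V → ℝ} {C : ℝ}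
    (hF : ∀ a, AEStronglyMeasurable (F a) μ) (hC : ∀ a x, ‖F a x‖ ≤ C)
    (hper : ∀ a i, Function.Periodic (F a) (b i)) :
    Tendsto (fun a => ∫ x, F a ((r a)⁻¹ • x) • w a x ∂μ
      - (∫ z, F a z ∂cellMeasure b μ) • ∫ x, w a x ∂μ) l (𝓝 0) := by
  rw [Metric.tendsto_nhds]
  intro δ hδ
  have hsmall : ∀ᶠ a in l, ∀ z ∈ ZSpan.fundamentalDomain b,
      l1Modulus μ (w a) (r a • z) < δ / (|C| + 1) :=
    eventually_prod_principal_iff.1 (hslow.eventually_lt_const (by positivity))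
  filter_upwards [hsmall, hw, hr] with a ha hwa hra
  rw [dist_zero_right]
  calc _ ≤ C * (δ / (|C| + 1)) := norm_integral_oscillating_smul_sub_le (hF a) (hC a) (hper a)
        hwa hra fun z hz => (ha z hz).le
    _ < (|C| + 1) * (δ / (|C| + 1)) := by
        gcongr
        exact (le_abs_self C).trans_lt (lt_add_one _)
    _ = δ := by field_simp

lemma tendsto_integral_norm_oscillating_shift {r s : α → ℝ} (hr : ∀ᶠ a in l, r a ≠ 0)
    (hr0 : Tendsto r l (𝓝 0)) (hsr : Tendsto (fun a => s a / r a) l (𝓝 0)) {F : V → ℝ} {C : ℝ}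
    (hF : AEStronglyMeasurable F μ) (hC : ∀ x, ‖F x‖ ≤ C) (hper : ∀ i, Function.Periodic F (b i))
    {g : V → ℝ} (hg : Integrable g μ) :
    Tendsto (fun p : α × V =>
        ∫ x, ‖F ((r p.1)⁻¹ • (x + s p.1 • p.2)) - F ((r p.1)⁻¹ • x)‖ * g x ∂μ)
      (l ×ˢ 𝓟 (ZSpan.fundamentalDomain b)) (𝓝 0) := by
  have : FiniteDimensional ℝ V := b.finiteDimensional_of_finite
  set D := ZSpan.fundamentalDomain b
  -- `y ↦ ‖F (y + τ) - F y‖` is again periodic, so it can be averaged against `g` at scale `r`.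
  have hD : Bornology.IsBounded D := ZSpan.fundamentalDomain_isBounded b
  let τ (p : α × V) : V := (s p.1 / r p.1) • p.2
  let G (p : α × V) (y : V) : ℝ := ‖F (y + τ p) - F y‖
  have hG (p) : AEStronglyMeasurable (G p) μ :=
    ((hF.comp_measurePreserving (measurePreserving_add_right μ (τ p))).sub hF).norm
  have hGC (p y) : ‖G p y‖ ≤ C + C := by
    simpa only [G, norm_norm] using norm_sub_le_of_le (hC (y + τ p)) (hC y)
  have hGper (p i) : Function.Periodic (G p) (b i) := fun y => by
    simp only [G, add_right_comm y (b i), hper i _]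
  have hslow : SlowlyVarying μ D (l ×ˢ 𝓟 D) (fun p => r p.1) fun _ => g :=
    slowlyVarying_const hD (hr0.comp tendsto_fst) hg
  have hFloc : LocallyIntegrable F μ :=
    (locallyIntegrable_const C).mono hF (.of_forall fun x => (hC x).trans (le_abs_self C))
  have hmean : Tendsto (fun p => (∫ z, G p z ∂cellMeasure b μ) • ∫ x, g x ∂μ) (l ×ˢ 𝓟 D) (𝓝 0) := by
    have h := ((tendsto_l1Modulus_cellMeasure_zero (b := b) hFloc).comp
      (tendsto_smul_snd_zero hD hsr)).smul_const (∫ x, g x ∂μ)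
    rwa [zero_smul] at h
  have hsum := (hslow.tendsto_integral_oscillating_smul_sub (.of_forall fun _ => hg)
    (tendsto_fst.eventually hr) hG hGC hGper).add hmean
  simp only [sub_add_cancel, add_zero] at hsum
  simpa only [G, τ, smul_add, smul_smul, smul_eq_mul, div_eq_inv_mul] using hsum

lemma SlowlyVarying.oscillating_smul {r s : α → ℝ} {w : α → V → E} {g : V → ℝ}
    (hslow : SlowlyVarying μ (ZSpan.fundamentalDomain b) l s w)
    (hw : ∀ᶠ a in l, Integrable (w a) μ) (hg : Integrable g μ) (hwg : ∀ a x, ‖w a x‖ ≤ g x)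
    (hr : ∀ᶠ a in l, r a ≠ 0) (hr0 : Tendsto r l (𝓝 0))
    (hsr : Tendsto (fun a => s a / r a) l (𝓝 0)) {F : V → ℝ} {C : ℝ}
    (hF : AEStronglyMeasurable F μ) (hC : ∀ x, ‖F x‖ ≤ C)
    (hper : ∀ i, Function.Periodic F (b i)) :
    SlowlyVarying μ (ZSpan.fundamentalDomain b) l s fun a x => F ((r a)⁻¹ • x) • w a x := by
  have : FiniteDimensional ℝ V := b.finiteDimensional_of_finite
  have hbound := (hslow.const_mul C).add
    (tendsto_integral_norm_oscillating_shift hr hr0 hsr hF hC hper hg)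
  rw [mul_zero, add_zero] at hbound
  refine squeeze_zero' (.of_forall fun p => l1Modulus_nonneg _ _ _) ?_ hbound
  filter_upwards [tendsto_fst.eventually hw, tendsto_fst.eventually hr] with p hwp hrp
  exact l1Modulus_smul_le (hF.comp_quasiMeasurePreserving
    (Measure.quasiMeasurePreserving_smul μ (inv_ne_zero hrp))) (fun x => hC _) hwp hg (hwg p.1) _

lemma integrable_prod_oscillating_smul [FiniteDimensional ℝ V] {F : κ → V → ℝ} {C : κ → ℝ}
    (hF : ∀ k, AEStronglyMeasurable (F k) μ) (hC : ∀ k x, ‖F k x‖ ≤ C k) {K : Finset κ} {r : κ → ℝ}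
    (hr : ∀ k ∈ K, r k ≠ 0) {u : V → E} (hu : Integrable u μ) :
    Integrable (fun x => (∏ k ∈ K, F k ((r k)⁻¹ • x)) • u x) μ := by
  refine hu.bdd_smul (∏ k ∈ K, C k) ?_
    (ae_of_all μ fun x => norm_prod_le_prod_of_norm_le fun k _ => hC k _)
  exact Finset.aestronglyMeasurable_fun_prod K fun k hk => (hF k).comp_quasiMeasurePreserving
    (Measure.quasiMeasurePreserving_smul μ (inv_ne_zero (hr k hk)))

variable {F : κ → V → ℝ} {C : κ → ℝ} {r : κ → α → ℝ} {u : V → E}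

lemma slowlyVarying_prod_oscillating_smul
    (hF : ∀ k, AEStronglyMeasurable (F k) μ) (hC : ∀ k x, ‖F k x‖ ≤ C k)
    (hper : ∀ k i, Function.Periodic (F k) (b i)) (hr : ∀ k, ∀ᶠ a in l, r k a ≠ 0)
    (hr0 : ∀ k, Tendsto (r k) l (𝓝 0)) {s : α → ℝ} (hs : Tendsto s l (𝓝 0)) {K : Finset κ}
    (hsr : ∀ k ∈ K, Tendsto (fun a => s a / r k a) l (𝓝 0)) (hu : Integrable u μ) :
    SlowlyVarying μ (ZSpan.fundamentalDomain b) l s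
      fun a x => (∏ k ∈ K, F k ((r k a)⁻¹ • x)) • u x := by
  classical
  have : FiniteDimensional ℝ V := b.finiteDimensional_of_finite
  induction K using Finset.induction_on with
  | empty =>
    simpa only [Finset.prod_empty, one_smul] using
      slowlyVarying_const (ZSpan.fundamentalDomain_isBounded b) hs hu
  | insert m K hm ih =>
    have hK := ih fun k hk => hsr k (Finset.mem_insert_of_mem hk)
    have hint : ∀ᶠ a in l, Integrable (fun x => (∏ k ∈ K, F k ((r k a)⁻¹ • x)) • u x) μ :=
      ((Finset.eventually_all K).2 fun k _ => hr k).mono fun a ha =>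
        integrable_prod_oscillating_smul hF hC ha hu
    have hbound (a x) : ‖(∏ k ∈ K, F k ((r k a)⁻¹ • x)) • u x‖ ≤ (∏ k ∈ K, C k) * ‖u x‖ := by
      rw [norm_smul]
      gcongr
      exact norm_prod_le_prod_of_norm_le fun k _ => hC k _
    have := hK.oscillating_smul hint (hu.norm.const_mul _) hbound (hr m) (hr0 m)
      (hsr m (Finset.mem_insert_self m K)) (hF m) (hC m) (hper m)
    simpa only [Finset.prod_insert hm, mul_smul] using this

theorem tendsto_integral_prod_oscillating_smul [LinearOrder κ] [CompleteSpace E]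
    (hF : ∀ k, AEStronglyMeasurable (F k) μ) (hC : ∀ k x, ‖F k x‖ ≤ C k)
    (hper : ∀ k i, Function.Periodic (F k) (b i)) (hr : ∀ k, ∀ᶠ a in l, r k a ≠ 0)
    (hr0 : ∀ k, Tendsto (r k) l (𝓝 0))
    (hsep : ∀ j k, j < k → Tendsto (fun a => r k a / r j a) l (𝓝 0))
    (hu : Integrable u μ) (K : Finset κ) :
    Tendsto (fun a => ∫ x, (∏ k ∈ K, F k ((r k a)⁻¹ • x)) • u x ∂μ) l
      (𝓝 ((∏ k ∈ K, ∫ z, F k z ∂cellMeasure b μ) • ∫ x, u x ∂μ)) := by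
  have : FiniteDimensional ℝ V := b.finiteDimensional_of_finite
  induction K using Finset.induction_on_max with
  | empty => simp only [Finset.prod_empty, one_smul, tendsto_const_nhds]
  | insert m K hm ih =>
    have hmK : m ∉ K := fun hmem => (hm m hmem).false
    have hslow := slowlyVarying_prod_oscillating_smul hF hC hper hr hr0 (hr0 m)
      (fun k hk => hsep k m (hm k hk)) hu
    have hint : ∀ᶠ a in l, Integrable (fun x => (∏ k ∈ K, F k ((r k a)⁻¹ • x)) • u x) μ :=
      ((Finset.eventually_all K).2 fun k _ => hr k).mono fun a ha =>
        integrable_prod_oscillating_smul hF hC ha hu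
    have hstep := (hslow.tendsto_integral_oscillating_smul_sub hint (hr m) (fun _ => hF m)
      (fun _ => hC m) (fun _ => hper m)).add (ih.const_smul (∫ z, F m z ∂cellMeasure b μ))
    simpa only [sub_add_cancel, zero_add, Finset.prod_insert hmK, mul_smul] using hstep

end Scales

section Indicators

variable {V ι : Type*} [NormedAddCommGroup V] [NormedSpace ℝ V] [Fintype ι] {b : Basis ι ℝ V}
  {A : Set V}

lemma periodic_comp_fract {W : Type*} (f : V → W) (i : ι) :
    Function.Periodic (fun x => f (ZSpan.fract b x)) (b i) := fun x =>
  congrArg f (ZSpan.fract_add_ZSpan b x (Submodule.subset_span (mem_range_self i)))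

lemma fract_preimage_eq_iUnion (hA : A ⊆ ZSpan.fundamentalDomain b) :
    ZSpan.fract b ⁻¹' A = ⋃ g : Submodule.span ℤ (range b), (fun x => x + (g : V)) ⁻¹' A := by
  ext x
  simp only [mem_preimage, mem_iUnion]
  constructor
  · intro hx
    refine ⟨-ZSpan.floor b x, ?_⟩
    rwa [Submodule.coe_neg, ← sub_eq_add_neg, ← ZSpan.fract_apply]
  · rintro ⟨g, hg⟩
    rwa [← ZSpan.fract_add_ZSpan b x g.2, ZSpan.fract_eq_self.2 (hA hg)]

variable [MeasurableSpace V] [BorelSpace V] {μ : Measure V}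

lemma integral_indicator_fract_cellMeasure (hAm : NullMeasurableSet A μ) :
    ∫ z, A.indicator (1 : V → ℝ) (ZSpan.fract b z) ∂cellMeasure b μ
      = (cellMeasure b μ).real A := by
  have hfract : ∀ᵐ z ∂cellMeasure b μ,
      A.indicator (1 : V → ℝ) (ZSpan.fract b z) = A.indicator 1 z :=
    (ae_mem_fundamentalDomain_cellMeasure b μ).mono fun z hz => by rw [ZSpan.fract_eq_self.2 hz]
  rw [integral_congr_ae hfract,
    integral_indicator₀ (hAm.mono_ac (cellMeasure_absolutelyContinuous b μ))]
  simp only [Pi.one_apply, setIntegral_const, smul_eq_mul, mul_one]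

variable [μ.IsAddHaarMeasure]

lemma nullMeasurableSet_fract_preimage (hA : A ⊆ ZSpan.fundamentalDomain b)
    (hAm : NullMeasurableSet A μ) : NullMeasurableSet (ZSpan.fract b ⁻¹' A) μ := by
  rw [fract_preimage_eq_iUnion hA]
  exact .iUnion fun g => hAm.preimage (measurePreserving_add_right μ (g : V)).quasiMeasurePreserving

lemma aestronglyMeasurable_indicator_fract (hA : A ⊆ ZSpan.fundamentalDomain b)
    (hAm : NullMeasurableSet A μ) :
    AEStronglyMeasurable (fun x => A.indicator (1 : V → ℝ) (ZSpan.fract b x)) μ :=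
  (aestronglyMeasurable_const (b := (1 : ℝ))).indicator₀ (nullMeasurableSet_fract_preimage hA hAm)

theorem statement2_general {α E κ : Type*} {l : Filter α} [NormedAddCommGroup E] [NormedSpace ℝ E]
    [CompleteSpace E] [LinearOrder κ] [Fintype κ] {r : κ → α → ℝ}
    (hr : ∀ k, ∀ᶠ a in l, r k a ≠ 0) (hr0 : ∀ k, Tendsto (r k) l (𝓝 0))
    (hsep : ∀ j k, j < k → Tendsto (fun a => r k a / r j a) l (𝓝 0)) {A : κ → Set V}
    (hA : ∀ k, A k ⊆ ZSpan.fundamentalDomain b) (hAm : ∀ k, NullMeasurableSet (A k) μ)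
    {Ω : Set V} {u : V → E} (hu : IntegrableOn u Ω μ) :
    Tendsto
      (fun a => ∫ x in Ω,
        (univ.pi A).indicator (1 : (κ → V) → ℝ) (fun k => ZSpan.fract b ((r k a)⁻¹ • x)) • u x ∂μ)
      l (𝓝 ((∏ k, (cellMeasure b μ).real (A k)) • ∫ x in Ω, u x ∂μ)) := by
  have : FiniteDimensional ℝ V := b.finiteDimensional_of_finite
  have hΩ : MeasurableSet (toMeasurable μ Ω) := measurableSet_toMeasurable μ Ω
  rw [IntegrableOn, ← Measure.restrict_toMeasurable_of_sFinite, ← IntegrableOn,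
    ← integrable_indicator_iff hΩ] at hu
  have hlim := tendsto_integral_prod_oscillating_smul (b := b) (C := 1)
    (fun k => aestronglyMeasurable_indicator_fract (hA k) (hAm k))
    (fun k x => (norm_indicator_le_norm_self _ _).trans_eq norm_one)
    (fun k => periodic_comp_fract _) hr hr0 hsep hu Finset.univ
  simpa only [integral_indicator_fract_cellMeasure (hAm _), ← indicator_smul, integral_indicator hΩ,
    Measure.restrict_toMeasurable_of_sFinite, ← Set.indicator_pi_one_apply, Finset.coe_univ]
    using hlim

end Indicators

lemma tendsto_div_of_tendsto_succ_div {α : Type*} {l : Filter α} {n : ℕ} {r : Fin n → α → ℝ}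
    (hr : ∀ k, ∀ᶠ a in l, r k a ≠ 0)
    (hsep : ∀ (k : ℕ) (hk : k + 1 < n),
      Tendsto (fun a => r ⟨k + 1, hk⟩ a / r ⟨k, Nat.lt_of_succ_lt hk⟩ a) l (𝓝 0))
    (j k : Fin n) (hjk : j < k) : Tendsto (fun a => r k a / r j a) l (𝓝 0) := by
  obtain ⟨k, hk⟩ := k
  have hjk' : (j : ℕ) + 1 ≤ k := hjk
  induction k, hjk' using Nat.le_induction with
  | base => exact hsep j hk
  | succ k hjk' ih =>
    have hk' : k < n := Nat.lt_of_succ_lt hk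
    have hprod := (hsep k hk).mul (ih hk' hjk')
    rw [mul_zero] at hprod
    exact hprod.congr' ((hr ⟨k, hk'⟩).mono fun a ha => div_mul_div_cancel₀ ha)

section UnitCell

variable {d : ℕ}

lemma fundamentalDomain_pi_basisFun_eq_unitCell :
    ZSpan.fundamentalDomain (Pi.basisFun ℝ (Fin d)) = unitCell d :=
  ZSpan.fundamentalDomain_pi_basisFun

lemma cellMeasure_pi_basisFun_real {A : Set (Fin d → ℝ)} (hA : A ⊆ unitCell d) :
    (cellMeasure (Pi.basisFun ℝ (Fin d)) volume).real A = (volume A).toReal := by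
  rw [cellMeasure, measureReal_def, ProbabilityTheory.cond_apply
    (ZSpan.fundamentalDomain_measurableSet _), fundamentalDomain_pi_basisFun_eq_unitCell,
    inter_eq_self_of_subset_right hA, unitCell, Real.volume_pi_Ico]
  simp

lemma vFn_eq_fract {n : ℕ} (ρ : Fin n → ℝ → ℝ) (ε : ℕ → ℝ) (h : ℕ) (x : Fin d → ℝ) :
    vFn ρ ε h x = fun k => ZSpan.fract (Pi.basisFun ℝ (Fin d)) ((ρ k (ε h))⁻¹ • x) := by
  ext k i
  rw [← Pi.basisFun_repr ℝ (Fin d) (ZSpan.fract _ _), ZSpan.repr_fract_apply, Pi.basisFun_repr,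
    Pi.smul_apply, smul_eq_mul, vFn, div_eq_inv_mul]

end UnitCell

/-- For measurable `A_k ⊆ □`, the functions `x ↦ χ_{A_1 × ⋯ × A_n}(v_h(x))`
converge weakly* in `L^∞(Ω)` to the constant `∏_k |A_k|`. -/
theorem statement2
    (d n : ℕ) (hd : 0 < d) (hn : 0 < n)
    (Ω : Set (Fin d → ℝ)) (hΩo : IsOpen Ω) (hΩb : Bornology.IsBounded Ω)
    (ρ : Fin n → ℝ → ℝ) (hρpos : ∀ k e, 0 < e → 0 < ρ k e)
    (hρ0 : ∀ k, Tendsto (ρ k) (𝓝[>] 0) (𝓝 0))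
    (hsep : ∀ (k : ℕ) (hk : k + 1 < n),
      Tendsto (fun e => ρ ⟨k + 1, hk⟩ e / ρ ⟨k, Nat.lt_of_succ_lt hk⟩ e) (𝓝[>] 0) (𝓝 0))
    (ε : ℕ → ℝ) (hεpos : ∀ h, 0 < ε h) (hε0 : Tendsto ε atTop (𝓝 0))
    (A : Fin n → Set (Fin d → ℝ)) (hAm : ∀ k, MeasurableSet (A k))
    (hAc : ∀ k, A k ⊆ unitCell d)
    (u : (Fin d → ℝ) → ℝ) (hu : IntegrableOn u Ω) :
    Tendsto
      (fun h => ∫ x in Ω,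
        u x * (Set.univ.pi A).indicator (fun _ => (1 : ℝ)) (vFn ρ ε h x)) atTop
      (𝓝 ((∏ k, (volume (A k)).toReal) * ∫ x in Ω, u x)) := by
  have hε : Tendsto ε atTop (𝓝[>] 0) := tendsto_nhdsWithin_iff.2 ⟨hε0, .of_forall hεpos⟩
  have hρε (k) : ∀ᶠ h in atTop, ρ k (ε h) ≠ 0 := .of_forall fun h => (hρpos k _ (hεpos h)).ne'
  have hlim := statement2_general (b := Pi.basisFun ℝ (Fin d)) hρε (fun k => (hρ0 k).comp hε)
    (tendsto_div_of_tendsto_succ_div hρε fun k hk => (hsep k hk).comp hε)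
    (fun k => (hAc k).trans_eq fundamentalDomain_pi_basisFun_eq_unitCell.symm)
    (fun k => (hAm k).nullMeasurableSet) hu
  simp only [← vFn_eq_fract, cellMeasure_pi_basisFun_real (hAc _)] at hlim
  simpa only [smul_eq_mul, mul_comm (u _), Pi.one_def] using hlim
end
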